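/- For general points: ℓ(L(4e+4, 4e−4, 6^{2e})) = 14 − 6e for 1 ≤ e ≤ 2 (virtual dimension −6e + 8); ℓ(L(4e+5, 4e−3, 6^{2e})) = 20 − 6e for 1 ≤ e ≤ 2 (virtual dimension −6e + 17); and ℓ(L(4e+6, 4e−2, 6^{2e})) = 27 − 6e for 1 ≤ e ≤ 4 (virtual dimension −6e + 26); in particular all these systems are special. -/

import Mathlib

open MvPolynomial

/-- The iterated partial derivative corresponding to the multi-index `ν`. -/
noncomputable def mderiv (ν : Fin 3 → ℕ) :
    MvPolynomial (Fin 3) ℂ →ₗ[ℂ] MvPolynomial (Fin 3) ℂ :=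
  ((pderiv (R := ℂ) (0 : Fin 3)).toLinearMap ^ ν 0) ∘ₗ
  ((pderiv (R := ℂ) (1 : Fin 3)).toLinearMap ^ ν 1) ∘ₗ
  ((pderiv (R := ℂ) (2 : Fin 3)).toLinearMap ^ ν 2)

/-- The linear system `L(d; m)` of homogeneous forms of degree `d` in three variables
all of whose partial derivatives of order `< m i` vanish at the point `p i`,
i.e. plane curves of degree `d` with multiplicity at least `m i` at `p i`. -/
noncomputable def linSys {k : ℕ} (p : Fin k → Fin 3 → ℂ) (d : ℕ) (m : Fin k → ℕ) :
    Submodule ℂ (MvPolynomial (Fin 3) ℂ) :=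
  (homogeneousSubmodule (Fin 3) ℂ d) ⊓
    ⨅ (i : Fin k), ⨅ (ν : Fin 3 → ℕ), ⨅ (_ : ν 0 + ν 1 + ν 2 < m i),
      LinearMap.ker ((aeval (p i)).toLinearMap ∘ₗ mderiv ν)

/-- The projective dimension `ℓ` of the linear system (`-1` means empty). -/
noncomputable def projDim {k : ℕ} (p : Fin k → Fin 3 → ℂ) (d : ℕ) (m : Fin k → ℕ) : ℤ :=
  (Module.finrank ℂ (linSys p d m) : ℤ) - 1

/-- The virtual dimension `v = d(d+3)/2 - ∑ mᵢ(mᵢ+1)/2`. -/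
def virtDim {k : ℕ} (d : ℕ) (m : Fin k → ℕ) : ℤ :=
  ((d : ℤ) * (d + 3)) / 2 - ∑ i : Fin k, ((m i : ℤ) * (m i + 1)) / 2

/-- The quasi-homogeneous multiplicity vector `(m₀, 6, …, 6)` on `n + 1` points. -/
def qh (n m0 : ℕ) : Fin (n + 1) → ℕ := fun i => if i = 0 then m0 else 6

/-- A property `Q` of configurations of `k` points of `ℙ²` (given by nonzero homogeneous
coordinate vectors) holds for points in general position: there is a nonzero polynomial
in the coordinates such that `Q` holds whenever it does not vanish. -/
def Generically (k : ℕ) (Q : (Fin k → Fin 3 → ℂ) → Prop) : Prop :=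
  ∃ P : MvPolynomial (Fin k × Fin 3) ℂ, P ≠ 0 ∧
    ∀ p : Fin k → Fin 3 → ℂ, (∀ i, p i ≠ 0) →
      eval (fun x => p x.1 x.2) P ≠ 0 → Q p

/-!
Write `d = 4e + 4 + b` and `m₀ = 4(e - 1) + b` with `b ≤ 4`. Counting conditions, there is a curve
`F` of degree `e` with multiplicity `e - 1` at `p 0` and `1` at the `2e` other points. Its free
intersection number with `L(d, m₀, 6^{2e})` is `-(4 - b)`, so `F` splits off `4 - b` times, and the
residual system `L(be + b + 4, be, (b + 2)^{2e})` has virtual dimension `(b + 6).choose 2 - 1 - 6e`.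
This is a lower bound for `ℓ`, and for `b ≤ 2` it exceeds the virtual dimension `9b + 8 - 6e` of the
original system.

Conversely, the dimension is upper semicontinuous in the points, so one configuration suffices for
the upper bound. The quadratic Cremona transformation based at `p 0` and two sixfold points lowers
`d` and `m₀` by `4` and turns the sixfold points into double points. After `e` such steps one is
left with forms of degree `b + 4` with `2e` double points. For quartics and quintics with `4`, and
sextics with `8`, double points in special position on lines, splitting off these lines
successively shows that the double points impose independent conditions.
-/

section PointIdeal

variable {σ τ K : Type*} [Field K] {q : σ → K} {m : ℕ} {f : MvPolynomial σ K}

/-- The maximal ideal of the point `q`. A polynomial has multiplicity at least `m` at `q` exactly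
when it lies in `pointIdeal q ^ m`. -/
noncomputable abbrev pointIdeal (q : σ → K) : Ideal (MvPolynomial σ K) :=
  vanishingIdeal K {q}

lemma mem_pointIdeal : f ∈ pointIdeal q ↔ eval q f = 0 :=
  mem_vanishingIdeal_singleton_iff q f

lemma pointIdeal_zero : pointIdeal (0 : σ → K) = idealOfVars σ K := by
  ext f
  rw [mem_pointIdeal, ← pow_one (idealOfVars σ K), mem_pow_idealOfVars_iff']
  simp [constantCoeff_eq, Finsupp.degree_eq_zero_iff]

lemma eval_bind₁ (q : σ → K) (φ : τ → MvPolynomial σ K) (f : MvPolynomial τ K) :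
    eval q (bind₁ φ f) = eval (fun i => eval q (φ i)) f := by
  simp [← aeval_eq_eval, aeval_bind₁]

lemma bind₁_mem_pointIdeal_pow {q : σ → K} {φ : τ → MvPolynomial σ K} {f : MvPolynomial τ K}
    (hf : f ∈ pointIdeal (fun i => eval q (φ i)) ^ m) : bind₁ φ f ∈ pointIdeal q ^ m := by
  have hle : pointIdeal (fun i => eval q (φ i)) ≤ (pointIdeal q).comap (bind₁ φ) := fun g hg => by
    rwa [Ideal.mem_comap, mem_pointIdeal, eval_bind₁, ← mem_pointIdeal]
  exact Ideal.le_comap_pow _ m (Ideal.pow_right_mono hle m hf)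

lemma pderiv_mem_pointIdeal_pow (i : σ) (hf : f ∈ pointIdeal q ^ (m + 1)) :
    pderiv i f ∈ pointIdeal q ^ m := by
  induction m generalizing f with
  | zero => simp
  | succ m ih =>
    rw [pow_succ'] at hf
    induction hf using Submodule.mul_induction_on' with
    | mem_mul_mem g hg h hh =>
      rw [(pderiv i).leibniz, smul_eq_mul, smul_eq_mul, pow_succ' _ m]
      exact add_mem (Ideal.mul_mem_mul hg (ih hh))
        (Ideal.mul_mem_right _ _ (pow_succ' (pointIdeal q) m ▸ hh))
    | add g _ h _ hg hh => simpa using add_mem hg hh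

lemma pderiv_bind₁_X_add_C (i : σ) (q : σ → K) (f : MvPolynomial σ K) :
    pderiv i (bind₁ (fun j => X j + C (q j)) f) =
      bind₁ (fun j => X j + C (q j)) (pderiv i f) := by
  classical
  induction f using MvPolynomial.induction_on with
  | C a => simp
  | add f g hf hg => simp [hf, hg]
  | mul_X f j hf =>
    simp only [map_mul, (pderiv i).leibniz, bind₁_X_right, hf, map_add, pderiv_X, pderiv_C,
      add_zero, smul_eq_mul, Pi.single_apply]
    split_ifs <;> simp

variable [CharZero K]

lemma mem_idealOfVars_pow_succ_of_pderiv (h0 : constantCoeff f = 0)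
    (h : ∀ i, pderiv i f ∈ idealOfVars σ K ^ m) : f ∈ idealOfVars σ K ^ (m + 1) := by
  rw [mem_pow_idealOfVars_iff']
  intro a ha
  rcases eq_or_ne a 0 with rfl | ha0
  · exact h0
  obtain ⟨i, hi⟩ := Finsupp.ne_iff.1 ha0
  obtain ⟨b, rfl⟩ := exists_add_of_le
    (Finsupp.single_le_iff.2 (Nat.one_le_iff_ne_zero.2 hi) : Finsupp.single i 1 ≤ a)
  have hb := (mem_pow_idealOfVars_iff' _ _).1 (h i) b (by simpa [Nat.one_add_le_iff] using ha)
  rw [coeff_pderiv, add_comm] at hb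
  exact (mul_eq_zero.1 hb).resolve_right (by exact_mod_cast (b i).succ_ne_zero)

lemma mem_pointIdeal_pow_succ_iff : f ∈ pointIdeal q ^ (m + 1) ↔
    eval q f = 0 ∧ ∀ i, pderiv i f ∈ pointIdeal q ^ m := by
  refine ⟨fun hf => ⟨mem_pointIdeal.1 (Ideal.pow_le_self m.succ_ne_zero hf),
    fun i => pderiv_mem_pointIdeal_pow i hf⟩, fun ⟨h0, h⟩ => ?_⟩
  have hg : bind₁ (fun j => X j + C (q j)) f ∈ pointIdeal 0 ^ (m + 1) := by
    rw [pointIdeal_zero]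
    refine mem_idealOfVars_pow_succ_of_pderiv ?_ fun i => ?_
    · rw [← eval_zero', eval_bind₁]
      simpa using h0
    · rw [pderiv_bind₁_X_add_C, ← pointIdeal_zero]
      exact bind₁_mem_pointIdeal_pow (by simpa using h i)
  have key : bind₁ (fun j => X j - C (q j)) (bind₁ (fun j => X j + C (q j)) f) = f := by
    simp [bind₁_bind₁]
  rw [← key]
  exact bind₁_mem_pointIdeal_pow (by simpa using! hg)

end PointIdeal

section HomogeneousSubmodule

variable {K : Type*} [Field K]

instance finite_homogeneousSubmodule {σ : Type*} [Finite σ] (d : ℕ) :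
    Module.Finite K (homogeneousSubmodule σ K d) :=
  Module.Finite.iff_fg.2 (homogeneousSubmodule_fg σ K d)

lemma finrank_homogeneousSubmodule (n d : ℕ) :
    Module.finrank K (homogeneousSubmodule (Fin (n + 1)) K d) = (n + d).choose n := by
  have e : {a : Fin (n + 1) →₀ ℕ | a.degree = d} ≃
      (Finset.univ : Finset (Fin (n + 1))).finsuppAntidiag d :=
    Equiv.subtypeEquivRight fun a => by
      simp [Finset.mem_finsuppAntidiag, Finsupp.degree_eq_sum]
  have : Fintype {a : Fin (n + 1) →₀ ℕ | a.degree = d} := Fintype.ofEquiv _ e.symm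
  rw [homogeneousSubmodule_eq_finsupp_supported,
    (AddMonoidAlgebra.supportedEquivFinsupp _).finrank_eq, Module.finrank_finsupp_self,
    Fintype.card_congr e, Fintype.card_coe, Finset.card_finsuppAntidiag_nat_eq_choose,
    Finset.card_univ, Fintype.card_fin, Nat.succ_add_sub_one, Nat.choose_symm_add]

end HomogeneousSubmodule

section LinSys

variable {k d m : ℕ} {q : Fin 3 → ℂ} {f : MvPolynomial (Fin 3) ℂ}

lemma pderiv_comm (i j : Fin 3) (f : MvPolynomial (Fin 3) ℂ) :
    pderiv i (pderiv j f) = pderiv j (pderiv i f) := by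
  ext a
  rcases eq_or_ne i j with rfl | h
  · rfl
  · simp only [coeff_pderiv, Finsupp.add_apply, Finsupp.single_apply, h, h.symm, if_false,
      add_zero, add_right_comm a]
    ring

lemma mderiv_zero : mderiv 0 f = f := by
  simp [mderiv]

lemma mderiv_add_single (i : Fin 3) (ν : Fin 3 → ℕ) :
    mderiv (ν + Pi.single i 1) f = mderiv ν (pderiv i f) := by
  have hcomm (i j : Fin 3) (n : ℕ) : Commute (pderiv (R := ℂ) i).toLinearMap
      ((pderiv (R := ℂ) j).toLinearMap ^ n) :=
    Commute.pow_right (LinearMap.ext fun f => pderiv_comm i j f) n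
  have h : mderiv (ν + Pi.single i 1) = mderiv ν * (pderiv i).toLinearMap := by
    unfold mderiv
    simp only [← Module.End.mul_eq_comp]
    fin_cases i
    · simp [pow_succ, mul_assoc, ((hcomm 0 1 _).mul_right (hcomm 0 2 _)).eq]
    · simp [pow_succ, mul_assoc, (hcomm 1 2 _).eq]
    · simp [pow_succ, mul_assoc]
  exact LinearMap.congr_fun h f

lemma exists_eq_add_single {ν : Fin 3 → ℕ} (h : ν ≠ 0) :
    ∃ (i : Fin 3) (μ : Fin 3 → ℕ), ν = μ + Pi.single i 1 := by
  obtain ⟨i, hi⟩ := Function.ne_iff.1 h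
  refine ⟨i, ν - Pi.single i 1, (tsub_add_cancel_of_le fun j => ?_).symm⟩
  rcases eq_or_ne j i with rfl | hj
  · simpa [Nat.one_le_iff_ne_zero] using hi
  · simp [hj]

lemma mem_pointIdeal_pow_iff_mderiv : f ∈ pointIdeal q ^ m ↔
    ∀ ν : Fin 3 → ℕ, ∑ i, ν i < m → eval q (mderiv ν f) = 0 := by
  induction m generalizing f with
  | zero => simp
  | succ m ih =>
    simp only [mem_pointIdeal_pow_succ_iff, ih, ← mderiv_add_single]
    constructor
    · rintro ⟨h0, h⟩ ν hν
      rcases eq_or_ne ν 0 with rfl | hν0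
      · rwa [mderiv_zero]
      · obtain ⟨i, μ, rfl⟩ := exists_eq_add_single hν0
        exact h i μ (by simpa [Finset.sum_add_distrib] using hν)
    · refine fun h => ⟨by simpa [mderiv_zero] using h 0 (by simp), fun i ν hν => h _ ?_⟩
      simpa [Finset.sum_add_distrib] using hν

lemma mem_linSys {p : Fin k → Fin 3 → ℂ} {m : Fin k → ℕ} :
    f ∈ linSys p d m ↔ f.IsHomogeneous d ∧ ∀ i, f ∈ pointIdeal (p i) ^ m i := by
  simp [linSys, mem_pointIdeal_pow_iff_mderiv, Fin.sum_univ_three, aeval_eq_eval]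

instance finite_linSys (p : Fin k → Fin 3 → ℂ) (d : ℕ) (m : Fin k → ℕ) :
    Module.Finite ℂ (linSys p d m) :=
  Submodule.finiteDimensional_of_le (S₂ := homogeneousSubmodule (Fin 3) ℂ d) inf_le_left

end LinSys

section DimensionCount

variable {k d m : ℕ} {q : Fin 3 → ℂ} {f : MvPolynomial (Fin 3) ℂ}

-- Euler's identity recovers the value of a form from its derivatives, hence a form vanishes to
-- order `> m` as soon as its derivatives of order exactly `m` vanish.
lemma mem_pointIdeal_pow_succ_of_isHomogeneous (hf : f.IsHomogeneous d) (hm : m ≤ d)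
    (h : ∀ ν : Fin 3 → ℕ, ∑ i, ν i = m → eval q (mderiv ν f) = 0) :
    f ∈ pointIdeal q ^ (m + 1) := by
  rw [mem_pointIdeal_pow_succ_iff]
  induction m generalizing f d with
  | zero => exact ⟨by simpa [mderiv_zero] using h 0 (by simp), by simp⟩
  | succ m ih =>
    have hderiv (i : Fin 3) : pderiv i f ∈ pointIdeal q ^ (m + 1) :=
      mem_pointIdeal_pow_succ_iff.2 <| ih (hf.pderiv (i := i)) (by omega) fun ν hν => by
        rw [← mderiv_add_single]
        exact h _ (by simp [Finset.sum_add_distrib, hν])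
    have euler := congrArg (eval q) hf.sum_X_mul_pderiv
    simp only [map_sum, map_mul, mem_pointIdeal.1 (Ideal.pow_le_self m.succ_ne_zero (hderiv _)),
      mul_zero, Finset.sum_const_zero, nsmul_eq_mul, map_natCast] at euler
    exact ⟨(mul_eq_zero.1 euler.symm).resolve_left (by norm_cast; omega), hderiv⟩

lemma finrank_le_of_mapsTo {K V V' : Type*} [Field K] [AddCommGroup V] [Module K V]
    [AddCommGroup V'] [Module K V'] {U : Submodule K V} {W : Submodule K V'} [Module.Finite K W]
    (T : V →ₗ[K] V') (hUW : ∀ f ∈ U, T f ∈ W) (hT : ∀ f ∈ U, T f = 0 → f = 0) :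
    Module.finrank K U ≤ Module.finrank K W :=
  LinearMap.finrank_le_finrank_of_injective <| LinearMap.ker_eq_bot.1 <|
    (LinearMap.ker_eq_bot' (f := T.restrict hUW)).2 fun f hf =>
      Subtype.ext (hT f f.2 (congrArg Subtype.val hf))

lemma finrank_le_finrank_inf_ker_add {K V V' : Type*} [Field K] [AddCommGroup V] [Module K V]
    [AddCommGroup V'] [Module K V'] {W : Submodule K V} [Module.Finite K W] {T : Submodule K V'}
    [Module.Finite K T] (A : V →ₗ[K] V') (hA : ∀ f ∈ W, A f ∈ T) :
    Module.finrank K W ≤ Module.finrank K ↥(W ⊓ LinearMap.ker A) + Module.finrank K T := by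
  rw [← (A.domRestrict W).finrank_range_add_finrank_ker, add_comm, LinearMap.ker_domRestrict,
    ← Submodule.finrank_map_subtype_eq, Submodule.map_comap_subtype]
  refine Nat.add_le_add_left (Submodule.finrank_mono ?_) _
  rintro _ ⟨f, rfl⟩
  exact hA f f.2

lemma finrank_le_finrank_inf_pointIdeal_pow_add {W : Submodule ℂ (MvPolynomial (Fin 3) ℂ)}
    (hW : W ≤ homogeneousSubmodule (Fin 3) ℂ d) (q : Fin 3 → ℂ) (m : ℕ) :
    Module.finrank ℂ W ≤
      Module.finrank ℂ ↥(W ⊓ (pointIdeal q ^ m).restrictScalars ℂ) + (m + 1).choose 2 := by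
  have : Module.Finite ℂ W := Submodule.finiteDimensional_of_le hW
  cases m with
  | zero =>
    rw [pow_zero, Ideal.one_eq_top, Submodule.restrictScalars_top, inf_top_eq]
    exact Nat.le_add_right _ _
  | succ m =>
    rcases lt_or_ge d m with hm | hm
    · calc Module.finrank ℂ W
          ≤ (2 + d).choose 2 :=
            (Submodule.finrank_mono hW).trans_eq (finrank_homogeneousSubmodule 2 d)
        _ ≤ (m + 1 + 1).choose 2 := Nat.choose_le_choose 2 (by omega)
        _ ≤ _ := Nat.le_add_left _ _
    · let conditions : MvPolynomial (Fin 3) ℂ →ₗ[ℂ]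
          ((Finset.univ : Finset (Fin 3)).finsuppAntidiag m → ℂ) :=
        LinearMap.pi fun ν => (aeval q).toLinearMap ∘ₗ mderiv ν.1
      have hle : W ⊓ LinearMap.ker conditions ≤
          W ⊓ (pointIdeal q ^ (m + 1)).restrictScalars ℂ := fun f hf =>
        ⟨hf.1, mem_pointIdeal_pow_succ_of_isHomogeneous (hW hf.1) hm fun ν hν =>
          congrFun hf.2 ⟨Finsupp.equivFunOnFinite.symm ν, by
            simp [Finset.mem_finsuppAntidiag, hν]⟩⟩
      have hcard : Module.finrank ℂ ((Finset.univ : Finset (Fin 3)).finsuppAntidiag m → ℂ) =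
          (m + 1 + 1).choose 2 := by
        rw [Module.finrank_fintype_fun_eq_card, Fintype.card_coe,
          Finset.card_finsuppAntidiag_nat_eq_choose, Finset.card_univ, Fintype.card_fin,
          Nat.succ_add_sub_one, ← Nat.choose_symm_add, add_comm 2]
      rw [← hcard, ← finrank_top ℂ (_ → ℂ)]
      exact (finrank_le_finrank_inf_ker_add conditions fun _ _ => Submodule.mem_top).trans
        (Nat.add_le_add_right (Submodule.finrank_mono hle) _)

lemma linSys_succ (p : Fin (k + 1) → Fin 3 → ℂ) (d : ℕ) (m : Fin (k + 1) → ℕ) :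
    linSys p d m = linSys (p ∘ Fin.castSucc) d (m ∘ Fin.castSucc) ⊓
      (pointIdeal (p (Fin.last k)) ^ m (Fin.last k)).restrictScalars ℂ := by
  ext f
  simp only [Submodule.mem_inf, mem_linSys, Fin.forall_fin_succ', and_assoc,
    Submodule.restrictScalars_mem, Function.comp_apply]

lemma finrank_linSys_castSucc_le (p : Fin (k + 1) → Fin 3 → ℂ) (d : ℕ) (m : Fin (k + 1) → ℕ) :
    Module.finrank ℂ (linSys (p ∘ Fin.castSucc) d (m ∘ Fin.castSucc)) ≤
      Module.finrank ℂ (linSys p d m) + (m (Fin.last k) + 1).choose 2 := by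
  rw [linSys_succ]
  exact finrank_le_finrank_inf_pointIdeal_pow_add inf_le_left _ _

lemma choose_le_finrank_linSys (p : Fin k → Fin 3 → ℂ) (d : ℕ) (m : Fin k → ℕ) :
    (2 + d).choose 2 ≤ Module.finrank ℂ (linSys p d m) + ∑ i, (m i + 1).choose 2 := by
  induction k with
  | zero =>
    rw [← finrank_homogeneousSubmodule (K := ℂ)]
    exact (Submodule.finrank_mono fun f hf => mem_linSys.2 ⟨hf, finZeroElim⟩).trans
      (Nat.le_add_right _ _)
  | succ k ih =>
    rw [Fin.sum_univ_castSucc, add_comm (∑ i, _), ← add_assoc]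
    exact (ih (p ∘ Fin.castSucc) (m ∘ Fin.castSucc)).trans
      (Nat.add_le_add_right (finrank_linSys_castSucc_le p d m) _)

end DimensionCount

section Semicontinuity

variable {σ ι κ K : Type*} [Field K] [Finite ι] [Fintype κ]

lemma exists_comp_comp_eq_id {V V' : Type*} [AddCommGroup V] [Module K V] [AddCommGroup V']
    [Module K V'] (A : V →ₗ[K] V') {n : ℕ} [Module.Finite K (LinearMap.range A)]
    (hn : Module.finrank K (LinearMap.range A) = n) :
    ∃ (B : V' →ₗ[K] Fin n → K) (D : (Fin n → K) →ₗ[K] V), B ∘ₗ A ∘ₗ D = LinearMap.id := by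
  obtain ⟨s, hs⟩ := A.rangeRestrict.exists_rightInverse_of_surjective A.range_rangeRestrict
  obtain ⟨l, hl⟩ := (LinearMap.range A).subtype.exists_leftInverse_of_injective
    (Submodule.ker_subtype _)
  let e : LinearMap.range A ≃ₗ[K] (Fin n → K) := LinearEquiv.ofFinrankEq _ _ (by simp [hn])
  refine ⟨e.toLinearMap ∘ₗ l, s ∘ₗ e.symm.toLinearMap, LinearMap.ext fun v => ?_⟩
  have hAs (w : LinearMap.range A) : A (s w) = w := congrArg Subtype.val (LinearMap.congr_fun hs w)
  have hl' (w : LinearMap.range A) : l w = w := LinearMap.congr_fun hl w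
  simp [hAs, hl']

lemma exists_eval_ne_zero_rank_le (A : Matrix ι κ (MvPolynomial σ K)) (x₀ : σ → K) :
    ∃ P : MvPolynomial σ K, eval x₀ P ≠ 0 ∧
      ∀ x, eval x P ≠ 0 → (A.map (eval x₀)).rank ≤ (A.map (eval x)).rank := by
  classical
  have := Fintype.ofFinite ι
  obtain ⟨B₀, D₀, hBD₀⟩ :=
    exists_comp_comp_eq_id (A.map (eval x₀)).mulVecLin (n := (A.map (eval x₀)).rank) rfl
  let B := LinearMap.toMatrix' B₀
  let D := LinearMap.toMatrix' D₀
  have hBD : B * A.map (eval x₀) * D = 1 := by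
    simpa only [LinearMap.toMatrix'_comp, ← Matrix.toLin'_apply', LinearMap.toMatrix'_toLin',
      LinearMap.toMatrix'_id, Matrix.mul_assoc] using congrArg LinearMap.toMatrix' hBD₀
  let B' : Matrix _ ι (MvPolynomial σ K) := B.map C
  let D' : Matrix κ _ (MvPolynomial σ K) := D.map C
  let M := B' * A * D'
  have hM (x : σ → K) : M.map (eval x) = B * A.map (eval x) * D := by
    simp [M, B', D', Matrix.map_mul, Matrix.map_map, Function.comp_def]
  refine ⟨M.det, ?_, fun x hx => ?_⟩
  · simp [RingHom.map_det, hM, hBD]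
  · rw [RingHom.map_det, RingHom.mapMatrix_apply, hM] at hx
    calc _ = (B * A.map (eval x) * D).rank := by
          rw [Matrix.rank_of_det_ne_zero hx, Fintype.card_fin]
      _ ≤ (B * A.map (eval x)).rank := Matrix.rank_mul_le_left _ _
      _ ≤ _ := Matrix.rank_mul_le_right _ _

end Semicontinuity

section Generic

variable {k d : ℕ} {m : Fin k → ℕ}

/-- The multi-indices of order less than `m`. -/
def multiIndicesLT (m : ℕ) : Finset (Fin 3 → ℕ) :=
  (Finset.range m).biUnion (Finset.piAntidiag Finset.univ)

lemma mem_multiIndicesLT {m : ℕ} {ν : Fin 3 → ℕ} : ν ∈ multiIndicesLT m ↔ ∑ i, ν i < m := by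
  simp [multiIndicesLT]

/-- The linear conditions that `L(d; m)` imposes on the forms of degree `d`, in a basis of these
forms; the entries are polynomials in the coordinates of the points. -/
noncomputable def conditionMatrix (d : ℕ) (m : Fin k → ℕ) :
    Matrix (Σ i : Fin k, multiIndicesLT (m i))
      (Fin (Module.finrank ℂ (homogeneousSubmodule (Fin 3) ℂ d)))
      (MvPolynomial (Fin k × Fin 3) ℂ) :=
  fun c j => rename (fun t => (c.1, t)) (mderiv c.2.1 (Module.finBasis ℂ _ j).1)

lemma finrank_linSys_add_rank (p : Fin k → Fin 3 → ℂ) (d : ℕ) (m : Fin k → ℕ) :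
    Module.finrank ℂ (linSys p d m) +
      ((conditionMatrix d m).map (eval fun x => p x.1 x.2)).rank = (2 + d).choose 2 := by
  classical
  let b := Module.finBasis ℂ (homogeneousSubmodule (Fin 3) ℂ d)
  let A : MvPolynomial (Fin 3) ℂ →ₗ[ℂ] ((Σ i : Fin k, multiIndicesLT (m i)) → ℂ) :=
    LinearMap.pi fun c => (aeval (p c.1)).toLinearMap ∘ₗ mderiv c.2.1
  have hmatrix : (conditionMatrix d m).map (eval fun x => p x.1 x.2) =
      LinearMap.toMatrix b (Pi.basisFun ℂ _)
        (A.domRestrict (homogeneousSubmodule (Fin 3) ℂ d)) := by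
    ext c j
    simp [conditionMatrix, LinearMap.toMatrix_apply, A, b, eval_rename, aeval_eq_eval,
      Function.comp_def]
  have hker : homogeneousSubmodule (Fin 3) ℂ d ⊓ LinearMap.ker A = linSys p d m := by
    ext f
    simp only [Submodule.mem_inf, mem_linSys, mem_homogeneousSubmodule, LinearMap.mem_ker,
      funext_iff, Sigma.forall, Subtype.forall, mem_multiIndicesLT, mem_pointIdeal_pow_iff_mderiv]
    simp [A, aeval_eq_eval]
  rw [← finrank_homogeneousSubmodule (K := ℂ) 2 d, hmatrix,
    Matrix.rank_eq_finrank_range_toLin _ (Pi.basisFun ℂ _) b, Matrix.toLin_toMatrix, add_comm,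
    ← (A.domRestrict (homogeneousSubmodule (Fin 3) ℂ d)).finrank_range_add_finrank_ker,
    LinearMap.ker_domRestrict, ← Submodule.finrank_map_subtype_eq, Submodule.map_comap_subtype,
    hker]

namespace Generically

variable {Q Q' : (Fin k → Fin 3 → ℂ) → Prop}

lemma mono (hQ : Generically k Q) (h : ∀ p, Q p → Q' p) : Generically k Q' :=
  let ⟨P, hP, hPQ⟩ := hQ
  ⟨P, hP, fun p hp hpP => h p (hPQ p hp hpP)⟩

lemma and (hQ : Generically k Q) (hQ' : Generically k Q') :
    Generically k fun p => Q p ∧ Q' p :=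
  let ⟨P, hP, hPQ⟩ := hQ
  let ⟨P', hP', hPQ'⟩ := hQ'
  ⟨P * P', mul_ne_zero hP hP', fun p hp hpP => by
    rw [map_mul] at hpP
    exact ⟨hPQ p hp (left_ne_zero_of_mul hpP), hPQ' p hp (right_ne_zero_of_mul hpP)⟩⟩

lemma forall_finite {α : Type*} [Finite α] {R : α → (Fin k → Fin 3 → ℂ) → Prop}
    (h : ∀ a, Generically k (R a)) : Generically k fun p => ∀ a, R a p := by
  cases nonempty_fintype α
  choose P hP hPR using h
  refine ⟨∏ a, P a, Finset.prod_ne_zero_iff.2 fun a _ => hP a, fun p hp hpP a => ?_⟩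
  rw [map_prod, Finset.prod_ne_zero_iff] at hpP
  exact hPR a p hp (hpP a (Finset.mem_univ a))

lemma exists_point (hQ : Generically k Q) : ∃ p, Q p := by
  obtain ⟨P, hP, hPQ⟩ := hQ
  have hne : P * ∏ i, X (i, 0) ≠ 0 :=
    mul_ne_zero hP (Finset.prod_ne_zero_iff.2 fun i _ => X_ne_zero _)
  obtain ⟨x, hx⟩ : ∃ x, eval x (P * ∏ i, X (i, 0)) ≠ 0 := by
    by_contra! h
    exact hne (MvPolynomial.funext fun x => by rw [h, map_zero])
  simp only [map_mul, map_prod, eval_X, mul_ne_zero_iff, Finset.prod_ne_zero_iff] at hx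
  exact ⟨fun i j => x (i, j),
    hPQ _ (fun i h => hx.2 i (Finset.mem_univ i) (congrFun h 0)) hx.1⟩

end Generically

lemma generically_finrank_linSys_le (p₀ : Fin k → Fin 3 → ℂ) (d : ℕ) (m : Fin k → ℕ) :
    Generically k fun p => Module.finrank ℂ (linSys p d m) ≤ Module.finrank ℂ (linSys p₀ d m) := by
  obtain ⟨P, hP, hrank⟩ :=
    exists_eval_ne_zero_rank_le (conditionMatrix d m) fun x => p₀ x.1 x.2
  refine ⟨P, fun h => hP (by rw [h, map_zero]), fun p _ hp => ?_⟩
  have := hrank _ hp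
  have := finrank_linSys_add_rank p d m
  have := finrank_linSys_add_rank p₀ d m
  omega

lemma generically_linearIndependent (w : Fin 3 ↪ Fin k) :
    Generically k fun p => LinearIndependent ℂ (p ∘ w) := by
  let P : MvPolynomial (Fin k × Fin 3) ℂ := (Matrix.of fun t r => X (w t, r)).det
  have hP (p : Fin k → Fin 3 → ℂ) :
      eval (fun x => p x.1 x.2) P = (Matrix.of (p ∘ w)).det := by
    rw [RingHom.map_det]
    congr 1
    ext t r
    simp
  refine ⟨P, fun h => ?_, fun p _ hp => ?_⟩
  · have hdet := hP fun i r => if i = w r then 1 else 0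
    have hone : Matrix.of ((fun i r => if i = w r then (1 : ℂ) else 0) ∘ w) = 1 := by
      ext t r
      simp [Matrix.one_apply]
    rw [h, map_zero, hone, Matrix.det_one] at hdet
    exact zero_ne_one hdet
  · rw [hP] at hp
    exact Matrix.linearIndependent_rows_of_det_ne_zero hp

lemma finrank_linSys_comp_linearEquiv_le (L : (Fin 3 → ℂ) ≃ₗ[ℂ] (Fin 3 → ℂ))
    (p : Fin k → Fin 3 → ℂ) (d : ℕ) (m : Fin k → ℕ) :
    Module.finrank ℂ (linSys (L ∘ p) d m) ≤ Module.finrank ℂ (linSys p d m) := by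
  let φ : Fin 3 → MvPolynomial (Fin 3) ℂ := fun j => ∑ i, C (L (Pi.single i 1) j) * X i
  have hφ (x : Fin 3 → ℂ) : (fun j => eval x (φ j)) = L x := by
    ext j
    conv_rhs => rw [← (Pi.basisFun ℂ (Fin 3)).sum_repr x]
    simp [φ, mul_comm]
  have hmaps : ∀ f ∈ linSys (L ∘ p) d m, bind₁ φ f ∈ linSys p d m := fun f hf => by
    rw [mem_linSys] at hf ⊢
    refine ⟨?_, fun i => bind₁_mem_pointIdeal_pow ?_⟩
    · simpa using hf.1.aeval φ fun j =>
        IsHomogeneous.sum _ _ 1 fun i _ => isHomogeneous_C_mul_X _ _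
    · rw [hφ]
      exact hf.2 i
  refine finrank_le_of_mapsTo (bind₁ φ).toLinearMap hmaps fun f _ hf =>
    MvPolynomial.funext fun y => ?_
  have hy : eval (L.symm y) (bind₁ φ f) = 0 := by
    rw [← AlgHom.toLinearMap_apply, hf, map_zero]
  rwa [eval_bind₁, hφ, L.apply_symm_apply] at hy

lemma exists_normalized (v : Fin 3 ↪ Fin k) (p₀ : Fin k → Fin 3 → ℂ) (d : ℕ) (m : Fin k → ℕ) :
    ∃ q : Fin k → Fin 3 → ℂ, (∀ s, q (v s) = Pi.single s 1) ∧
      (∀ i ∉ Set.range v, ∀ s, q i s ≠ 0) ∧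
      Module.finrank ℂ (linSys q d m) ≤ Module.finrank ℂ (linSys p₀ d m) := by
  obtain ⟨p, hpd, hp⟩ := ((generically_finrank_linSys_le p₀ d m).and
    (Generically.forall_finite generically_linearIndependent)).exists_point
  obtain ⟨b, hbv⟩ : ∃ b : Module.Basis (Fin 3) ℂ (Fin 3 → ℂ), ∀ s, b s = p (v s) :=
    ⟨basisOfLinearIndependentOfCardEqFinrank (hp v) (by simp), fun s => by simp⟩
  have hb (s : Fin 3) : b.equivFun (p (v s)) = Pi.single s 1 := by
    ext t
    simp [← hbv, Pi.single_apply, eq_comm]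
  refine ⟨b.equivFun ∘ p, hb, fun i hi s hs => ?_,
    (finrank_linSys_comp_linearEquiv_le b.equivFun p d m).trans hpd⟩
  let w : Fin 3 ↪ Fin k := v.setValue s i
  have hw : LinearIndependent ℂ (b.equivFun ∘ p ∘ w) :=
    (hp w).map' b.equivFun.toLinearMap b.equivFun.ker
  have hzero : LinearMap.proj (R := ℂ) (φ := fun _ : Fin 3 => ℂ) s = 0 := by
    refine LinearMap.ext_on_range (hw.span_eq_top_of_card_eq_finrank (by simp)) fun t => ?_
    rcases eq_or_ne t s with rfl | ht
    · simpa [w] using hs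
    · have hwt : w t = v t := v.setValue_eq_of_ne ht fun h => hi ⟨t, h⟩
      simp [hwt, hb, ht]
  simpa using LinearMap.congr_fun hzero (Pi.single s 1)

end Generic

section Cremona

section CoordinatePoint

variable {σ K : Type*} [Field K] [DecidableEq σ]

lemma bind₁_update_X_one_monomial (s : σ) (α : σ →₀ ℕ) (c : K) :
    bind₁ (Function.update X s 1) (monomial α c) = monomial (α.erase s) c := by
  rw [bind₁_monomial, monomial_eq, ← Finsupp.prod, ← Finsupp.mul_prod_erase' _ s _ (by simp),
    Function.update_self, one_pow, one_mul]
  refine congrArg _ (Finsupp.prod_congr fun t ht => ?_)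
  rw [Function.update_of_ne (by rintro rfl; simp at ht)]

lemma monomial_mem_pointIdeal_single_pow {s : σ} {m : ℕ} {α : σ →₀ ℕ} (h : α s + m ≤ α.degree)
    (c : K) : monomial α c ∈ pointIdeal (Pi.single s 1) ^ m := by
  have hdeg : m ≤ (α.erase s).degree := by
    rw [← Finsupp.erase_add_single s α, map_add, Finsupp.degree_single] at h
    simp only [Finsupp.add_apply, Finsupp.erase_same, Finsupp.single_eq_same] at h
    omega
  rw [monomial_eq, ← Finsupp.mul_prod_erase' α s _ (by simp)]
  refine Ideal.mul_mem_left _ _ (Ideal.mul_mem_left _ _ (Ideal.pow_le_pow_right hdeg ?_))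
  rw [Finsupp.degree_apply, Finsupp.prod, ← Finset.prod_pow_eq_pow_sum]
  refine Ideal.prod_mem_prod fun t ht => Ideal.pow_mem_pow ?_ _
  have hts : t ≠ s := by rintro rfl; simp at ht
  simp [hts]

lemma mem_pointIdeal_single_pow_iff {s : σ} {d m : ℕ} {f : MvPolynomial σ K}
    (hf : f.IsHomogeneous d) :
    f ∈ pointIdeal (Pi.single s 1) ^ m ↔ ∀ α ∈ f.support, α s + m ≤ d := by
  refine ⟨fun h α hα => ?_, fun h => ?_⟩
  · have hdeg {β : σ →₀ ℕ} (hβ : β ∈ f.support) : (β.erase s).degree + β s = d := by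
      rw [hf.degree_eq_sum_deg_support hβ, ← Finsupp.degree_apply]
      conv_rhs => rw [← Finsupp.erase_add_single s β, map_add, Finsupp.degree_single]
    have hcoeff : coeff (α.erase s) (bind₁ (Function.update X s 1) f) = coeff α f := by
      conv_lhs => rw [f.as_sum]
      simp only [map_sum, bind₁_update_X_one_monomial, coeff_sum, coeff_monomial]
      rw [Finset.sum_eq_single_of_mem α hα fun β hβ hne => if_neg fun h => hne ?_, if_pos rfl]
      have hs : β s = α s := by
        have := hdeg hα
        have := hdeg hβ
        rw [h] at this
        omega
      rw [← Finsupp.erase_add_single s β, h, hs, Finsupp.erase_add_single]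
    have hmem : bind₁ (Function.update X s 1) f ∈ idealOfVars σ K ^ m := by
      rw [← pointIdeal_zero]
      refine bind₁_mem_pointIdeal_pow ?_
      convert h using 4 with t
      rcases eq_or_ne t s with rfl | ht <;> simp [*]
    by_contra! hlt
    refine mem_support_iff.1 hα (hcoeff ▸ (mem_pow_idealOfVars_iff' _ _).1 hmem _ ?_)
    have := hdeg hα
    omega
  · rw [f.as_sum]
    refine sum_mem fun α hα => monomial_mem_pointIdeal_single_pow ?_ _
    rw [Finsupp.degree_apply, ← hf.degree_eq_sum_deg_support hα]
    exact h α hα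

end CoordinatePoint

/-- The components of the standard quadratic Cremona transformation `x ↦ (x₁x₂ : x₀x₂ : x₀x₁)`,
written uniformly. -/
noncomputable def cremona (s : Fin 3) : MvPolynomial (Fin 3) ℂ :=
  ∏ t ∈ Finset.univ.erase s, X t

variable {d : ℕ} {f : MvPolynomial (Fin 3) ℂ}

lemma X_mul_cremona (s : Fin 3) : X s * cremona s = ∏ t, X t :=
  Finset.mul_prod_erase _ _ (Finset.mem_univ s)

lemma prod_univ_X_pow {σ R : Type*} [CommSemiring R] [Fintype σ] (α : σ →₀ ℕ) :
    ∏ i, X i ^ α i = (monomial α 1 : MvPolynomial σ R) := by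
  rw [monomial_eq, C_1, one_mul, Finsupp.prod_fintype _ _ (by simp)]

lemma bind₁_cremona_monomial {α β : Fin 3 →₀ ℕ} (h : ∀ s, α s + β s = α.degree) (c : ℂ) :
    bind₁ cremona (monomial α c) = monomial β c := by
  refine mul_left_cancel₀ (show monomial α (1 : ℂ) ≠ 0 by simp) ?_
  calc monomial α 1 * bind₁ cremona (monomial α c)
      = C c * ∏ s, (X s * cremona s) ^ α s := by
        rw [bind₁_monomial, ← Finsupp.prod, Finsupp.prod_fintype _ _ (by simp), ← prod_univ_X_pow,
          mul_left_comm, ← Finset.prod_mul_distrib]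
        simp only [mul_pow]
    _ = C c * ∏ s, X s ^ (α + β) s := by
        simp only [X_mul_cremona, Finset.prod_pow_eq_pow_sum, ← Finsupp.degree_eq_sum,
          Finset.prod_pow, Finsupp.add_apply, h]
    _ = monomial α 1 * monomial β c := by
        rw [prod_univ_X_pow, C_mul_monomial, monomial_mul, mul_one, one_mul]

lemma bind₁_cremona_bind₁_cremona (hf : f.IsHomogeneous d) :
    bind₁ cremona (bind₁ cremona f) = (∏ t, X t) ^ d * f := by
  conv_lhs => rw [f.as_sum]
  conv_rhs => rw [f.as_sum]
  simp only [map_sum, Finset.mul_sum]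
  refine Finset.sum_congr rfl fun α hα => ?_
  have hα : α.degree = d := (hf.degree_eq_sum_deg_support hα).symm
  obtain ⟨β, hβ⟩ : ∃ β : Fin 3 →₀ ℕ, ∀ s, α s + β s = α.degree :=
    ⟨Finsupp.equivFunOnFinite.symm fun s => α.degree - α s,
      fun s => Nat.add_sub_of_le (Finsupp.le_degree s α)⟩
  let δ : Fin 3 →₀ ℕ := Finsupp.equivFunOnFinite.symm fun _ => d
  have hβδ (s : Fin 3) : β s + (δ + α) s = β.degree := by
    have h0 := hβ 0
    have h1 := hβ 1
    have h2 := hβ 2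
    have hs := hβ s
    simp only [Finsupp.add_apply, δ, Finsupp.equivFunOnFinite_symm_apply_apply]
    rw [Finsupp.degree_eq_sum, Fin.sum_univ_three] at *
    omega
  rw [bind₁_cremona_monomial hβ, bind₁_cremona_monomial hβδ, ← one_mul (coeff α f),
    ← monomial_mul, ← prod_univ_X_pow, one_mul, ← Finset.prod_pow]
  rfl

lemma eq_zero_of_bind₁_cremona_eq_zero (hf : f.IsHomogeneous d) (h : bind₁ cremona f = 0) :
    f = 0 := by
  have h0 := bind₁_cremona_bind₁_cremona hf
  rw [h, map_zero, eq_comm, mul_eq_zero] at h0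
  exact h0.resolve_left (pow_ne_zero _ (Finset.prod_ne_zero_iff.2 fun i _ => X_ne_zero i))

lemma exists_bind₁_cremona_eq {d' : ℕ} {a : Fin 3 → ℕ} (hd : d' + ∑ s, a s = 2 * d)
    (hf : f.IsHomogeneous d) (h : ∀ s, f ∈ pointIdeal (Pi.single s 1) ^ a s) :
    ∃ g : MvPolynomial (Fin 3) ℂ, bind₁ cremona f = (∏ s, X s ^ a s) * g ∧ g.IsHomogeneous d' ∧
      ∀ s, g ∈ pointIdeal (Pi.single s 1) ^ (d + a s - ∑ t, a t) := by
  let A : Fin 3 →₀ ℕ := Finsupp.equivFunOnFinite.symm a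
  let B (α : Fin 3 →₀ ℕ) : Fin 3 →₀ ℕ := Finsupp.equivFunOnFinite.symm fun s => d - (α s + a s)
  have hB {α} (hα : α ∈ f.support) : α.degree = d ∧ ∀ s, α s + a s + B α s = d :=
    ⟨(hf.degree_eq_sum_deg_support hα).symm, fun s =>
      Nat.add_sub_of_le ((mem_pointIdeal_single_pow_iff hf).1 (h s) α hα)⟩
  have hBdeg {α} (hα : α ∈ f.support) : (B α).degree = d' := by
    obtain ⟨hdeg, hαB⟩ := hB hα
    have h0 := hαB 0
    have h1 := hαB 1
    have h2 := hαB 2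
    rw [Finsupp.degree_eq_sum, Fin.sum_univ_three] at hdeg ⊢
    rw [Fin.sum_univ_three] at hd
    omega
  refine ⟨∑ α ∈ f.support, monomial (B α) (coeff α f), ?_, ?_, fun s => ?_⟩
  · conv_lhs => rw [f.as_sum, map_sum]
    rw [Finset.mul_sum]
    refine Finset.sum_congr rfl fun α hα => ?_
    rw [show ∏ s, X s ^ a s = monomial A (1 : ℂ) from prod_univ_X_pow A, monomial_mul, one_mul]
    exact bind₁_cremona_monomial (fun s => by
      rw [(hB hα).1, ← (hB hα).2 s, add_assoc]
      rfl) _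
  · exact IsHomogeneous.sum _ _ _ fun α hα => isHomogeneous_monomial _ (hBdeg hα)
  · refine sum_mem fun α hα => monomial_mem_pointIdeal_single_pow ?_ _
    have := (hB hα).2 s
    have := hBdeg hα
    have := Finsupp.le_degree s (B α)
    omega

lemma exists_finrank_linSys_le_of_cremona {k d d' : ℕ} {m m' : Fin k → ℕ} (v : Fin 3 ↪ Fin k)
    (hd : d' + ∑ s, m (v s) = 2 * d) (hmv : ∀ s, m' (v s) ≤ d + m (v s) - ∑ t, m (v t))
    (hm : ∀ i ∉ Set.range v, m' i ≤ m i) (p' : Fin k → Fin 3 → ℂ) :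
    ∃ p, Module.finrank ℂ (linSys p d m) ≤ Module.finrank ℂ (linSys p' d' m') := by
  classical
  obtain ⟨q, hqv, hqi, hq⟩ := exists_normalized v p' d' m'
  let p (i : Fin k) : Fin 3 → ℂ :=
    if i ∈ Set.range v then q i else fun s => eval (q i) (cremona s)
  have hpv (s : Fin 3) : p (v s) = Pi.single s 1 := by simp [p, hqv]
  have hpi {i} (hi : i ∉ Set.range v) : p i = fun s => eval (q i) (cremona s) := if_neg hi
  let M : MvPolynomial (Fin 3) ℂ := ∏ s, X s ^ m (v s)
  refine ⟨p, le_trans ?_ ((Submodule.finrank_map_le (LinearMap.mulLeft ℂ M) _).trans hq)⟩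
  refine finrank_le_of_mapsTo (bind₁ cremona).toLinearMap (fun f hf => ?_) fun f hf =>
    eq_zero_of_bind₁_cremona_eq_zero (mem_linSys.1 hf).1
  obtain ⟨hfd, hfp⟩ := mem_linSys.1 hf
  obtain ⟨g, hg, hgd, hgv⟩ :=
    exists_bind₁_cremona_eq (a := m ∘ v) hd hfd fun s => hpv s ▸ hfp (v s)
  refine ⟨g, mem_linSys.2 ⟨hgd, fun i => ?_⟩, hg.symm⟩
  by_cases hi : i ∈ Set.range v
  · obtain ⟨s, rfl⟩ := hi
    rw [hqv]
    exact Ideal.pow_le_pow_right (hmv s) (hgv s)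
  · have hM : M ∉ pointIdeal (q i) := by
      simp only [mem_pointIdeal, M, map_prod, map_pow, eval_X]
      exact Finset.prod_ne_zero_iff.2 fun s _ => pow_ne_zero _ (hqi i hi s)
    have hMg : M * g ∈ pointIdeal (q i) ^ m i := by
      change (∏ s, X s ^ (m ∘ v) s) * g ∈ _
      rw [← hg]
      exact bind₁_mem_pointIdeal_pow (hpi hi ▸ hfp i)
    exact Ideal.pow_le_pow_right (hm i hi) ((Ideal.IsMaximal.mul_mem_pow _ hMg).resolve_left hM)

end Cremona

section CremonaReduction

/-- The multiplicity vector `(a, b, …, b)` on `n + 1` points. -/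
def quasiHomogeneous (n a b : ℕ) : Fin (n + 1) → ℕ :=
  fun i => if i = 0 then a else b

/-- The multiplicity vector `(a, 2, …, 2, 6, …, 6)` on `n + 1` points, with `2 * t` entries `2`;
these occur when the pairs of sixfold points are turned into double points one by one. -/
def mixedMultiplicity (n t a : ℕ) : Fin (n + 1) → ℕ :=
  fun i => if i.val = 0 then a else if i.val ≤ 2 * t then 2 else 6

lemma qh_eq_mixedMultiplicity (n a : ℕ) : qh n a = mixedMultiplicity n 0 a := by
  ext i
  simp only [mixedMultiplicity, qh, ← Fin.val_eq_zero_iff]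
  split_ifs <;> omega

lemma mixedMultiplicity_eq_quasiHomogeneous (t a : ℕ) :
    mixedMultiplicity (2 * t) t a = quasiHomogeneous (2 * t) a 2 := by
  ext i
  simp only [mixedMultiplicity, quasiHomogeneous, ← Fin.val_eq_zero_iff]
  split_ifs <;> omega

lemma quasiHomogeneous_comp_castSucc (n a b : ℕ) :
    quasiHomogeneous (n + 1) a b ∘ Fin.castSucc = quasiHomogeneous n a b := by
  ext i
  simp [quasiHomogeneous]

lemma sum_choose_quasiHomogeneous (n a b : ℕ) :
    ∑ i, (quasiHomogeneous n a b i + 1).choose 2 = (a + 1).choose 2 + n * (b + 1).choose 2 := by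
  rw [Fin.sum_univ_succ]
  simp [quasiHomogeneous, Fin.succ_ne_zero]

-- The subtraction `a - 4` may truncate: for `a < 4` no condition is left at the point `0`.
lemma exists_finrank_linSys_mixedMultiplicity_le {n t a : ℕ} (ht : 2 * t + 2 ≤ n)
    (p' : Fin (n + 1) → Fin 3 → ℂ) :
    ∃ p, Module.finrank ℂ (linSys p (a + 8) (mixedMultiplicity n t a)) ≤
      Module.finrank ℂ (linSys p' (a + 4) (mixedMultiplicity n (t + 1) (a - 4))) := by
  let v : Fin 3 ↪ Fin (n + 1) := ⟨![0, ⟨2 * t + 1, by omega⟩, ⟨2 * t + 2, by omega⟩], fun i j => by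
    fin_cases i <;> fin_cases j <;> simp [Fin.ext_iff]⟩
  have hv : Fin.val ∘ v = ![0, 2 * t + 1, 2 * t + 2] := by
    ext s
    fin_cases s <;> rfl
  have hval (s : Fin 3) : (v s).val = ![0, 2 * t + 1, 2 * t + 2] s := congrFun hv s
  have hsource (s : Fin 3) : mixedMultiplicity n t a (v s) = ![a, 6, 6] s := by
    fin_cases s <;> simp [mixedMultiplicity, hval]
  have htarget (s : Fin 3) :
      mixedMultiplicity n (t + 1) (a - 4) (v s) = ![a - 4, 2, 2] s := by
    fin_cases s <;> simp [mixedMultiplicity, hval, mul_add]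
  have hsum : ∑ s, mixedMultiplicity n t a (v s) = a + 12 := by
    simp [Fin.sum_univ_three, hsource, add_assoc]
  refine exists_finrank_linSys_le_of_cremona v (by omega) (fun s => ?_) (fun i hi => ?_) p'
  · rw [hsum, hsource, htarget]
    fin_cases s <;> simp
    omega
  · have h0 : i.val ≠ 0 := fun h => hi ⟨0, Fin.ext h.symm⟩
    have : i.val ≠ 2 * t + 1 := fun h => hi ⟨1, Fin.ext h.symm⟩
    have : i.val ≠ 2 * t + 2 := fun h => hi ⟨2, Fin.ext h.symm⟩
    simp only [mixedMultiplicity, if_neg h0]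
    split_ifs <;> omega

lemma exists_finrank_linSys_mixedMultiplicity_le_quasiHomogeneous {n b r t : ℕ} (hb : b ≤ 4)
    (hn : n = 2 * (t + r + 1)) (p' : Fin (n + 1) → Fin 3 → ℂ) :
    ∃ p, Module.finrank ℂ (linSys p (4 * r + b + 8) (mixedMultiplicity n t (4 * r + b))) ≤
      Module.finrank ℂ (linSys p' (b + 4) (quasiHomogeneous n 0 2)) := by
  induction r generalizing t with
  | zero =>
    obtain rfl : n = 2 * (t + 1) := hn
    have h := exists_finrank_linSys_mixedMultiplicity_le (t := t) (a := b) (by omega) p'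
    rw [Nat.sub_eq_zero_of_le hb, mixedMultiplicity_eq_quasiHomogeneous] at h
    rwa [mul_zero, zero_add]
  | succ r ih =>
    obtain ⟨p₁, hp₁⟩ := ih (t := t + 1) (by omega)
    rw [show 4 * r + b = 4 * (r + 1) + b - 4 by omega,
      show 4 * (r + 1) + b - 4 + 8 = 4 * (r + 1) + b + 4 by omega] at hp₁
    obtain ⟨p, hp⟩ := exists_finrank_linSys_mixedMultiplicity_le (t := t) (by omega) p₁
    exact ⟨p, hp.trans hp₁⟩

lemma exists_finrank_linSys_qh_le {e b m₀ : ℕ} (he : 1 ≤ e) (hb : b ≤ 4)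
    (hm₀ : m₀ + 4 = 4 * e + b) (p' : Fin (2 * e + 1) → Fin 3 → ℂ) :
    ∃ p, Module.finrank ℂ (linSys p (4 * e + (b + 4)) (qh (2 * e) m₀)) ≤
      Module.finrank ℂ (linSys p' (b + 4) (quasiHomogeneous (2 * e) 0 2)) := by
  obtain rfl : m₀ = 4 * (e - 1) + b := by omega
  rw [qh_eq_mixedMultiplicity, show 4 * e + (b + 4) = 4 * (e - 1) + b + 8 by omega]
  exact exists_finrank_linSys_mixedMultiplicity_le_quasiHomogeneous hb (by omega) p'

end CremonaReduction

section Residuation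

variable {k d m : ℕ} {α β : ℂ} {q : Fin 3 → ℂ} {f g : MvPolynomial (Fin 3) ℂ}

lemma eval_smul_of_isHomogeneous {σ K : Type*} [CommRing K] {f : MvPolynomial σ K}
    (hf : f.IsHomogeneous d) (c : K) (x : σ → K) : eval (c • x) f = c ^ d * eval x f := by
  rw [eval_eq, eval_eq, Finset.mul_sum]
  refine Finset.sum_congr rfl fun a ha => ?_
  simp only [Pi.smul_apply, smul_eq_mul, mul_pow, Finset.prod_mul_distrib,
    Finset.prod_pow_eq_pow_sum, ← hf.degree_eq_sum_deg_support ha]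
  ring

lemma exists_eq_mul_of_dvd_of_isHomogeneous {σ K : Type*} [CommRing K] {ℓ f : MvPolynomial σ K}
    {a b : ℕ} (hℓ : ℓ.IsHomogeneous a) (hf : f.IsHomogeneous (a + b)) (h : ℓ ∣ f) :
    ∃ g, g.IsHomogeneous b ∧ f = ℓ * g := by
  let _ := gradedAlgebra (σ := σ) (R := K)
  obtain ⟨g, rfl⟩ := h
  refine ⟨_, (DirectSum.decompose (homogeneousSubmodule σ K) g b).2, ?_⟩
  rw [← DirectSum.coe_decompose_mul_add_of_left_mem _ hℓ, DirectSum.decompose_of_mem_same _ hf]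

/-- The linear form vanishing on the line `y = α x + β`, in the affine chart `(x : y : 1)`. -/
noncomputable def lineForm (α β : ℂ) : MvPolynomial (Fin 3) ℂ :=
  X 1 - C α * X 0 - C β * X 2

/-- Restriction of forms to the line `y = α x + β`, parametrized by `x`. -/
noncomputable def lineRestriction (α β : ℂ) : MvPolynomial (Fin 3) ℂ →ₐ[ℂ] Polynomial ℂ :=
  aeval ![Polynomial.X, Polynomial.C α * Polynomial.X + Polynomial.C β, 1]

lemma isHomogeneous_lineForm (α β : ℂ) : (lineForm α β).IsHomogeneous 1 :=
  ((isHomogeneous_X ℂ 1).sub (isHomogeneous_C_mul_X α 0)).sub (isHomogeneous_C_mul_X β 2)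

lemma pderiv_one_lineForm (α β : ℂ) : pderiv 1 (lineForm α β) = 1 := by
  simp [lineForm, (pderiv (1 : Fin 3)).leibniz, pderiv_X]

lemma eval_lineForm (α β : ℂ) (q : Fin 3 → ℂ) :
    eval q (lineForm α β) = q 1 - α * q 0 - β * q 2 := by
  simp [lineForm]

lemma eval_lineRestriction (α β t : ℂ) (f : MvPolynomial (Fin 3) ℂ) :
    (lineRestriction α β f).eval t = eval ![t, α * t + β, 1] f := by
  rw [lineRestriction, ← Polynomial.coe_aeval_eq_eval, ← aeval_eq_eval, comp_aeval_apply]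
  congr 2
  ext i
  fin_cases i <;> simp

lemma degree_lineRestriction_lt (hf : f.IsHomogeneous d) (α β : ℂ) :
    (lineRestriction α β f).degree < (d + 1 : ℕ) := by
  refine Polynomial.degree_le_natDegree.trans_lt (Nat.cast_lt.2 (Nat.lt_succ_of_le ?_))
  have h := aeval_natDegree_le f hf.totalDegree_le
    ![Polynomial.X, Polynomial.C α * Polynomial.X + Polynomial.C β, 1] (n := 1) fun i => by
      fin_cases i
      exacts [Polynomial.natDegree_X_le, Polynomial.natDegree_linear_le, by simp]
  rwa [mul_one] at h

lemma lineForm_dvd_of_lineRestriction_eq_zero (hf : f.IsHomogeneous d)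
    (h : lineRestriction α β f = 0) : lineForm α β ∣ f := by
  let φ : Fin 3 → MvPolynomial (Fin 3) ℂ := ![X 0, C α * X 0 + C β * X 2, X 2]
  have hmod : Ideal.Quotient.mkₐ ℂ (Ideal.span {lineForm α β}) =
      (Ideal.Quotient.mkₐ ℂ (Ideal.span {lineForm α β})).comp (bind₁ φ) := by
    refine algHom_ext fun i => ?_
    simp only [AlgHom.comp_apply, bind₁_X_right, Ideal.Quotient.mkₐ_eq_mk,
      Ideal.Quotient.mk_eq_mk_iff_sub_mem, Ideal.mem_span_singleton]
    fin_cases i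
    · simp [φ]
    · simp [φ, lineForm, sub_sub]
    · simp [φ]
  have hφ : X 2 * bind₁ φ f = 0 := MvPolynomial.funext fun r => by
    rw [map_mul, eval_X, eval_bind₁, map_zero, mul_eq_zero, or_iff_not_imp_left]
    intro hr
    have hscale : (fun i => eval r (φ i)) = r 2 • ![r 0 / r 2, α * (r 0 / r 2) + β, 1] := by
      ext i
      fin_cases i <;> simp [φ] <;> field_simp
    rw [hscale, eval_smul_of_isHomogeneous hf, ← eval_lineRestriction, h, Polynomial.eval_zero,
      mul_zero]
  rw [← Ideal.mem_span_singleton, ← Ideal.Quotient.eq_zero_iff_mem, ← Ideal.Quotient.mkₐ_eq_mk ℂ,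
    hmod, AlgHom.comp_apply, (mul_eq_zero.1 hφ).resolve_left (X_ne_zero 2), map_zero]

lemma X_sub_C_pow_dvd_lineRestriction {t : ℂ} (hf : f ∈ pointIdeal ![t, α * t + β, 1] ^ m) :
    (Polynomial.X - Polynomial.C t) ^ m ∣ lineRestriction α β f := by
  have hle : pointIdeal ![t, α * t + β, 1] ≤
      (Ideal.span {Polynomial.X - Polynomial.C t}).comap (lineRestriction α β) := fun g hg => by
    rw [Ideal.mem_comap, Ideal.mem_span_singleton, Polynomial.dvd_iff_isRoot, Polynomial.IsRoot,
      eval_lineRestriction, mem_pointIdeal.1 hg]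
  rw [← Ideal.mem_span_singleton, ← Ideal.span_singleton_pow]
  exact Ideal.le_comap_pow _ m (Ideal.pow_right_mono hle m hf)

-- The coefficient `n + 1` makes the hypothesis stable under differentiation.
lemma mem_pointIdeal_pow_of_nsmul_add_mem {ℓ : MvPolynomial (Fin 3) ℂ} {i : Fin 3}
    (hℓ : ℓ ∈ pointIdeal q) (hi : pderiv i ℓ = 1) {n : ℕ}
    (hg : (n + 1) • g + ℓ * pderiv i g ∈ pointIdeal q ^ m) : g ∈ pointIdeal q ^ m := by
  induction m generalizing n g with
  | zero => simp
  | succ m ih =>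
    have hderiv : pderiv i g ∈ pointIdeal q ^ m := by
      refine ih (n := n + 1) ?_
      have h := pderiv_mem_pointIdeal_pow i hg
      simp only [map_add, map_nsmul, (pderiv i).leibniz, hi, smul_eq_mul, mul_one] at h
      convert h using 1
      module
    have hmul : ℓ * pderiv i g ∈ pointIdeal q ^ (m + 1) :=
      pow_succ' (pointIdeal q) m ▸ Ideal.mul_mem_mul hℓ hderiv
    have hsmul : (n + 1) • g ∈ pointIdeal q ^ (m + 1) := (add_mem_cancel_right hmul).1 hg
    rw [← Nat.cast_smul_eq_nsmul ℂ] at hsmul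
    exact (Submodule.smul_mem_iff ((pointIdeal q ^ (m + 1)).restrictScalars ℂ)
      (Nat.cast_ne_zero.2 n.succ_ne_zero)).1 hsmul

lemma mem_pointIdeal_pow_pred_of_lineForm_mul_mem (hq : lineForm α β ∈ pointIdeal q)
    (h : lineForm α β * g ∈ pointIdeal q ^ m) : g ∈ pointIdeal q ^ (m - 1) := by
  cases m with
  | zero => simp
  | succ m =>
    have h' := pderiv_mem_pointIdeal_pow 1 h
    rw [(pderiv (1 : Fin 3)).leibniz, pderiv_one_lineForm, smul_eq_mul, smul_eq_mul, mul_one,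
      add_comm] at h'
    exact mem_pointIdeal_pow_of_nsmul_add_mem (n := 0) hq (pderiv_one_lineForm α β)
      (by simpa using h')

lemma mem_map_mulLeft_degreeLT {K : Type*} [Field K] {P F : Polynomial K} {n : ℕ}
    (hP : P ≠ 0) (hF : F.degree < n) (h : P ∣ F) :
    F ∈ (Polynomial.degreeLT K (n - P.natDegree)).map (LinearMap.mulLeft K P) := by
  obtain ⟨G, rfl⟩ := h
  refine Submodule.mem_map_of_mem (Polynomial.mem_degreeLT.2 ?_)
  rcases eq_or_ne G 0 with rfl | hG
  · simp
  · rw [← Polynomial.natDegree_lt_iff_degree_lt (mul_ne_zero hP hG),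
      Polynomial.natDegree_mul hP hG] at hF
    rw [← Polynomial.natDegree_lt_iff_degree_lt hG]
    omega

variable {x y : Fin k → ℂ} {s : Finset (Fin k)} {μ : Fin k → ℕ}

lemma mem_linSys_of_lineForm_mul_mem (hs : ∀ i, i ∈ s ↔ y i = α * x i + β)
    (hg : g.IsHomogeneous d)
    (h : lineForm α β * g ∈ linSys (fun i => ![x i, y i, 1]) (d + 1) μ) :
    g ∈ linSys (fun i => ![x i, y i, 1]) d (fun i => if i ∈ s then μ i - 1 else μ i) := by
  refine mem_linSys.2 ⟨hg, fun i => ?_⟩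
  have hi := (mem_linSys.1 h).2 i
  have hline : lineForm α β ∈ pointIdeal ![x i, y i, 1] ↔ i ∈ s := by
    rw [mem_pointIdeal, eval_lineForm, hs, ← sub_eq_zero (a := y i)]
    simp [sub_sub]
  split_ifs with his
  · exact mem_pointIdeal_pow_pred_of_lineForm_mul_mem (hline.2 his) hi
  · exact (Ideal.IsMaximal.mul_mem_pow _ hi).resolve_left (mt hline.1 his)

lemma prod_dvd_lineRestriction (hx : Function.Injective x) (hs : ∀ i ∈ s, y i = α * x i + β)
    (hf : f ∈ linSys (fun i => ![x i, y i, 1]) d μ) :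
    ∏ i ∈ s, (Polynomial.X - Polynomial.C (x i)) ^ μ i ∣ lineRestriction α β f := by
  refine Finset.prod_dvd_of_coprime
    (fun i _ j _ hij => (Polynomial.pairwise_coprime_X_sub_C hx hij).pow) fun i hi => ?_
  refine X_sub_C_pow_dvd_lineRestriction ?_
  rw [← hs i hi]
  exact (mem_linSys.1 hf).2 i

lemma natDegree_prod_X_sub_C_pow (x : Fin k → ℂ) (s : Finset (Fin k)) (μ : Fin k → ℕ) :
    (∏ i ∈ s, (Polynomial.X - Polynomial.C (x i)) ^ μ i).natDegree = ∑ i ∈ s, μ i := by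
  rw [Polynomial.natDegree_prod_of_monic _ _ fun i _ => (Polynomial.monic_X_sub_C _).pow _]
  simp

lemma finrank_linSys_inf_ker_lineRestriction_le (hs : ∀ i, i ∈ s ↔ y i = α * x i + β) :
    Module.finrank ℂ ↥(linSys (fun i => ![x i, y i, 1]) (d + 1) μ ⊓
        LinearMap.ker (lineRestriction α β).toLinearMap) ≤
      Module.finrank ℂ (linSys (fun i => ![x i, y i, 1]) d
        (fun i => if i ∈ s then μ i - 1 else μ i)) := by
  have hle : linSys (fun i => ![x i, y i, 1]) (d + 1) μ ⊓
        LinearMap.ker (lineRestriction α β).toLinearMap ≤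
      (linSys (fun i => ![x i, y i, 1]) d (fun i => if i ∈ s then μ i - 1 else μ i)).map
        (LinearMap.mulLeft ℂ (lineForm α β)) := by
    rintro f ⟨hf, hker⟩
    have hhom := (mem_linSys.1 hf).1
    obtain ⟨g, hg, rfl⟩ := exists_eq_mul_of_dvd_of_isHomogeneous (isHomogeneous_lineForm α β)
      (add_comm d 1 ▸ hhom) (lineForm_dvd_of_lineRestriction_eq_zero hhom hker)
    exact Submodule.mem_map_of_mem (mem_linSys_of_lineForm_mul_mem hs hg hf)
  exact (Submodule.finrank_mono hle).trans (Submodule.finrank_map_le _ _)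

-- Castelnuovo's exact sequence of the line `y = α x + β`: the kernel of the restriction is the
-- residual system, and restrictions are divisible by the product over the points of the line.
lemma finrank_linSys_succ_le (hx : Function.Injective x)
    (hs : ∀ i, i ∈ s ↔ y i = α * x i + β) :
    Module.finrank ℂ (linSys (fun i => ![x i, y i, 1]) (d + 1) μ) ≤
      Module.finrank ℂ (linSys (fun i => ![x i, y i, 1]) d
        (fun i => if i ∈ s then μ i - 1 else μ i)) + (d + 2 - ∑ i ∈ s, μ i) := by
  let P := ∏ i ∈ s, (Polynomial.X - Polynomial.C (x i)) ^ μ i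
  have hP : P ≠ 0 :=
    Finset.prod_ne_zero_iff.2 fun i _ => pow_ne_zero _ (Polynomial.X_sub_C_ne_zero _)
  have hfin : Module.Finite ℂ (Polynomial.degreeLT ℂ (d + 2 - ∑ i ∈ s, μ i)) :=
    Module.Finite.equiv (Polynomial.degreeLTEquiv ℂ _).symm
  let T := (Polynomial.degreeLT ℂ (d + 2 - ∑ i ∈ s, μ i)).map (LinearMap.mulLeft ℂ P)
  have hT : Module.finrank ℂ T ≤ d + 2 - ∑ i ∈ s, μ i :=
    (Submodule.finrank_map_le _ _).trans_eq <| by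
      rw [(Polynomial.degreeLTEquiv ℂ _).finrank_eq, Module.finrank_fin_fun]
  have hres : ∀ f ∈ linSys (fun i => ![x i, y i, 1]) (d + 1) μ, lineRestriction α β f ∈ T :=
    fun f hf => by
      have h := mem_map_mulLeft_degreeLT hP (degree_lineRestriction_lt (mem_linSys.1 hf).1 α β)
        (prod_dvd_lineRestriction hx (fun i hi => (hs i).1 hi) hf)
      rwa [natDegree_prod_X_sub_C_pow] at h
  exact (finrank_le_finrank_inf_ker_add (lineRestriction α β).toLinearMap hres).trans
    (add_le_add (finrank_linSys_inf_ker_lineRestriction_le hs) hT)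

/-- The upper bound for `finrank ℂ (linSys p d μ)` at the points `p i = (i : y i : 1)` obtained by
splitting off, one after the other, the lines of slope `α` and intercept `β` with `(α, β)` in the
given list. The coordinates are integers so that the bound is computable. -/
def residuationBound (y : Fin k → ℤ) : List (ℤ × ℤ) → ℕ → (Fin k → ℕ) → ℕ
  | [], d, _ => (2 + d).choose 2
  | _ :: _, 0, _ => 1
  | (α, β) :: L, d + 1, μ =>
    let s : Finset (Fin k) := {i | y i = α * i.val + β}
    residuationBound y L d (fun i => if i ∈ s then μ i - 1 else μ i) + (d + 2 - ∑ i ∈ s, μ i)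

lemma finrank_linSys_le_choose (p : Fin k → Fin 3 → ℂ) (d : ℕ) (μ : Fin k → ℕ) :
    Module.finrank ℂ (linSys p d μ) ≤ (2 + d).choose 2 :=
  (Submodule.finrank_mono inf_le_left).trans_eq (finrank_homogeneousSubmodule 2 d)

lemma finrank_linSys_le_residuationBound (y : Fin k → ℤ) (L : List (ℤ × ℤ)) (d : ℕ)
    (μ : Fin k → ℕ) :
    Module.finrank ℂ (linSys (fun i => ![(i.val : ℂ), (y i : ℂ), 1]) d μ) ≤
      residuationBound y L d μ := by
  induction L, d, μ using residuationBound.induct y with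
  | case1 d μ => exact finrank_linSys_le_choose _ d μ
  | case2 _ _ μ => exact finrank_linSys_le_choose _ 0 μ
  | case3 α β L d μ s ih =>
    have hs (i : Fin k) : i ∈ s ↔ (y i : ℂ) = α * i.val + β := by
      simp only [s, Finset.mem_filter_univ]
      norm_cast
    exact (finrank_linSys_succ_le (Nat.cast_injective.comp Fin.val_injective) hs).trans
      (Nat.add_le_add_right ih _)

lemma exists_finrank_linSys_quartic_le :
    ∃ p, Module.finrank ℂ (linSys p 4 (quasiHomogeneous 4 0 2)) ≤ 3 :=
  ⟨_, (finrank_linSys_le_residuationBound ![0, 0, 0, 1, 1]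
    [(0, 0), (0, 1), (0, 0), (0, 1)] 4 _).trans (by decide)⟩

lemma exists_finrank_linSys_quintic_le :
    ∃ p, Module.finrank ℂ (linSys p 5 (quasiHomogeneous 4 0 2)) ≤ 9 :=
  ⟨_, (finrank_linSys_le_residuationBound ![0, 0, 0, 0, 1]
    [(0, 0), (0, 0), (0, 1), (0, 1)] 5 _).trans (by decide)⟩

lemma exists_finrank_linSys_sextic_le :
    ∃ p, Module.finrank ℂ (linSys p 6 (quasiHomogeneous 8 0 2)) ≤ 4 :=
  ⟨_, (finrank_linSys_le_residuationBound ![0, 1, 1, 1, -2, -1, 0, 0, 0]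
    [(0, 1), (1, -6), (0, 0), (0, 1), (1, -6), (0, 0)] 6 _).trans (by decide)⟩

lemma exists_finrank_linSys_quasiHomogeneous_add_le {n n' a b N : ℕ} (hn : n ≤ n')
    (h : ∃ p, Module.finrank ℂ (linSys p d (quasiHomogeneous n' a b)) +
      n' * (b + 1).choose 2 ≤ N) :
    ∃ p, Module.finrank ℂ (linSys p d (quasiHomogeneous n a b)) + n * (b + 1).choose 2 ≤ N := by
  induction n', hn using Nat.le_induction with
  | base => exact h
  | succ n' _ ih =>
    obtain ⟨p, hp⟩ := h
    refine ih ⟨p ∘ Fin.castSucc, ?_⟩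
    have hdrop := finrank_linSys_castSucc_le p d (quasiHomogeneous (n' + 1) a b)
    rw [quasiHomogeneous_comp_castSucc, quasiHomogeneous, if_neg (Fin.last_pos).ne'] at hdrop
    linarith

lemma exists_finrank_linSys_doublePoints_add_le {e b : ℕ}
    (h : b ≤ 1 ∧ e ≤ 2 ∨ b = 2 ∧ e ≤ 4) :
    ∃ p, Module.finrank ℂ (linSys p (b + 4) (quasiHomogeneous (2 * e) 0 2)) + 2 * e * 3 ≤
      (b + 6).choose 2 := by
  rcases h with ⟨hb, he⟩ | ⟨rfl, he⟩
  · refine exists_finrank_linSys_quasiHomogeneous_add_le (n' := 4) (by omega) ?_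
    interval_cases b
    · exact exists_finrank_linSys_quartic_le.imp fun _ h => Nat.add_le_add_right h 12
    · exact exists_finrank_linSys_quintic_le.imp fun _ h => Nat.add_le_add_right h 12
  · exact exists_finrank_linSys_quasiHomogeneous_add_le (n' := 8) (by omega)
      (exists_finrank_linSys_sextic_le.imp fun _ h => Nat.add_le_add_right h 24)

end Residuation

section FixedCurve

variable {k d e b : ℕ}

lemma finrank_linSys_le_of_mem {p : Fin k → Fin 3 → ℂ} {m mF : Fin k → ℕ}
    {F : MvPolynomial (Fin 3) ℂ} (hF : F ∈ linSys p e mF) (h0 : F ≠ 0) (r : ℕ) :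
    Module.finrank ℂ (linSys p d m) ≤ Module.finrank ℂ (linSys p (e * r + d) (r • mF + m)) := by
  obtain ⟨hFhom, hFmult⟩ := mem_linSys.1 hF
  refine finrank_le_of_mapsTo (LinearMap.mulLeft ℂ (F ^ r)) (fun f hf => ?_) fun f _ h =>
    (mul_eq_zero.1 h).resolve_left (pow_ne_zero r h0)
  obtain ⟨hfhom, hfmult⟩ := mem_linSys.1 hf
  refine mem_linSys.2 ⟨(hFhom.pow r).mul hfhom, fun i => ?_⟩
  rw [Pi.add_apply, Pi.smul_apply, smul_eq_mul, mul_comm r, pow_add, pow_mul]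
  exact Ideal.mul_mem_mul (Ideal.pow_mem_pow (hFmult i) r) (hfmult i)

lemma exists_mem_linSys_quasiHomogeneous_one (he : 1 ≤ e) (p : Fin (2 * e + 1) → Fin 3 → ℂ) :
    ∃ F ∈ linSys p e (quasiHomogeneous (2 * e) (e - 1) 1), F ≠ 0 := by
  have h := choose_le_finrank_linSys p e (quasiHomogeneous (2 * e) (e - 1) 1)
  have hcount : (2 + e).choose 2 = e.choose 2 + 2 * e + 1 := by
    qify
    simp only [Nat.cast_choose_two]
    push_cast
    ring
  rw [sum_choose_quasiHomogeneous, Nat.sub_add_cancel he, Nat.choose_self, hcount] at h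
  refine Submodule.exists_mem_ne_zero_of_ne_bot fun hbot => ?_
  rw [hbot, finrank_bot] at h
  omega

lemma choose_le_finrank_linSys_residual (e b : ℕ) (p : Fin (2 * e + 1) → Fin 3 → ℂ) :
    (b + 6).choose 2 ≤
      Module.finrank ℂ (linSys p (b * e + b + 4) (quasiHomogeneous (2 * e) (b * e) (b + 2))) +
        6 * e := by
  have h := choose_le_finrank_linSys p (b * e + b + 4) (quasiHomogeneous (2 * e) (b * e) (b + 2))
  have hcount : (2 + (b * e + b + 4)).choose 2 + 6 * e =
      (b + 6).choose 2 + ((b * e + 1).choose 2 + 2 * e * (b + 2 + 1).choose 2) := by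
    qify
    simp only [Nat.cast_choose_two]
    push_cast
    ring
  rw [sum_choose_quasiHomogeneous] at h
  omega

-- The curve `F` of degree `e` through the points, of multiplicity `e - 1` at the first one, splits
-- off `4 - b` times.
lemma choose_le_finrank_linSys_qh {m₀ : ℕ} (he : 1 ≤ e) (hb : b ≤ 4) (hm₀ : m₀ + 4 = 4 * e + b)
    (p : Fin (2 * e + 1) → Fin 3 → ℂ) :
    (b + 6).choose 2 ≤
      Module.finrank ℂ (linSys p (4 * e + (b + 4)) (qh (2 * e) m₀)) + 6 * e := by
  obtain ⟨F, hF, hF0⟩ := exists_mem_linSys_quasiHomogeneous_one he p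
  obtain ⟨r, hr⟩ := Nat.exists_eq_add_of_le' hb
  have hdeg : e * r + (b * e + b + 4) = 4 * e + (b + 4) := by
    rw [hr]
    ring
  have hmult : r • quasiHomogeneous (2 * e) (e - 1) 1 + quasiHomogeneous (2 * e) (b * e) (b + 2) =
      qh (2 * e) m₀ := by
    have hm : r * (e - 1) + b * e = m₀ := by
      obtain ⟨e, rfl⟩ := Nat.exists_eq_add_of_le' he
      rw [Nat.add_sub_cancel]
      nlinarith
    ext i
    simp only [Pi.add_apply, Pi.smul_apply, smul_eq_mul, quasiHomogeneous, qh]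
    split_ifs <;> omega
  have hle := finrank_linSys_le_of_mem (d := b * e + b + 4)
    (m := quasiHomogeneous (2 * e) (b * e) (b + 2)) hF hF0 r
  rw [hdeg, hmult] at hle
  exact (choose_le_finrank_linSys_residual e b p).trans (Nat.add_le_add_right hle _)

end FixedCurve

section Special

variable {e b m₀ : ℕ}

lemma virtDim_qh (n m₀ : ℕ) : virtDim (m₀ + 8) (qh n m₀) = 9 * m₀ + 44 - 21 * n := by
  have hd : ((m₀ + 8 : ℕ) * ((m₀ + 8 : ℕ) + 3) : ℤ) / 2 = m₀ * (m₀ + 1) / 2 + (9 * m₀ + 44) := by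
    rw [← Int.add_mul_ediv_right _ _ two_ne_zero]
    push_cast
    ring_nf
  rw [virtDim, hd, Fin.sum_univ_succ]
  simp [qh, Fin.succ_ne_zero]
  ring

lemma generically_finrank_linSys_qh (he : 1 ≤ e) (h : b ≤ 1 ∧ e ≤ 2 ∨ b = 2 ∧ e ≤ 4)
    (hm₀ : m₀ + 4 = 4 * e + b) :
    Generically (2 * e + 1) fun p =>
      Module.finrank ℂ (linSys p (4 * e + (b + 4)) (qh (2 * e) m₀)) + 6 * e =
        (b + 6).choose 2 := by
  obtain ⟨p', hp'⟩ := exists_finrank_linSys_doublePoints_add_le h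
  obtain ⟨p₀, hp₀⟩ := exists_finrank_linSys_qh_le he (by omega) hm₀ p'
  refine (generically_finrank_linSys_le p₀ (4 * e + (b + 4)) (qh (2 * e) m₀)).mono fun p hp => ?_
  have hge := choose_le_finrank_linSys_qh he (by omega) hm₀ p
  omega

lemma virtDim_eq_and_generically_projDim_eq (he : 1 ≤ e) (h : b ≤ 1 ∧ e ≤ 2 ∨ b = 2 ∧ e ≤ 4)
    (hm₀ : m₀ + 4 = 4 * e + b) :
    virtDim (4 * e + (b + 4)) (qh (2 * e) m₀) = -6 * (e : ℤ) + (9 * b + 8) ∧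
      Generically (2 * e + 1) fun p =>
        projDim p (4 * e + (b + 4)) (qh (2 * e) m₀) = ((b + 6).choose 2 - 1) - 6 * (e : ℤ) ∧
          projDim p (4 * e + (b + 4)) (qh (2 * e) m₀) >
            max (-1) (virtDim (4 * e + (b + 4)) (qh (2 * e) m₀)) := by
  have hv : virtDim (4 * e + (b + 4)) (qh (2 * e) m₀) = -6 * (e : ℤ) + (9 * b + 8) := by
    rw [show 4 * e + (b + 4) = m₀ + 8 by omega, virtDim_qh]
    push_cast
    omega
  have hgap : 9 * b + 9 < (b + 6).choose 2 ∧ 6 * e < (b + 6).choose 2 := by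
    have hb : b ≤ 2 := by omega
    interval_cases b <;> simp [Nat.choose] <;> omega
  refine ⟨hv, (generically_finrank_linSys_qh he h hm₀).mono fun p hp => ?_⟩
  rw [hv, projDim]
  omega

end Special

theorem special_L_4e_families :
    (∀ e : ℕ, 1 ≤ e → e ≤ 2 →
      virtDim (4 * e + 4) (qh (2 * e) (4 * e - 4)) = -6 * (e : ℤ) + 8 ∧
      Generically (2 * e + 1) (fun p =>
        projDim p (4 * e + 4) (qh (2 * e) (4 * e - 4)) = 14 - 6 * (e : ℤ) ∧
        projDim p (4 * e + 4) (qh (2 * e) (4 * e - 4)) >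
          max (-1) (virtDim (4 * e + 4) (qh (2 * e) (4 * e - 4))))) ∧
    (∀ e : ℕ, 1 ≤ e → e ≤ 2 →
      virtDim (4 * e + 5) (qh (2 * e) (4 * e - 3)) = -6 * (e : ℤ) + 17 ∧
      Generically (2 * e + 1) (fun p =>
        projDim p (4 * e + 5) (qh (2 * e) (4 * e - 3)) = 20 - 6 * (e : ℤ) ∧
        projDim p (4 * e + 5) (qh (2 * e) (4 * e - 3)) >
          max (-1) (virtDim (4 * e + 5) (qh (2 * e) (4 * e - 3))))) ∧
    (∀ e : ℕ, 1 ≤ e → e ≤ 4 →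
      virtDim (4 * e + 6) (qh (2 * e) (4 * e - 2)) = -6 * (e : ℤ) + 26 ∧
      Generically (2 * e + 1) (fun p =>
        projDim p (4 * e + 6) (qh (2 * e) (4 * e - 2)) = 27 - 6 * (e : ℤ) ∧
        projDim p (4 * e + 6) (qh (2 * e) (4 * e - 2)) >
          max (-1) (virtDim (4 * e + 6) (qh (2 * e) (4 * e - 2))))) :=
  ⟨fun _ he _ => virtDim_eq_and_generically_projDim_eq (b := 0) he (by omega) (by omega),
    fun _ he _ => virtDim_eq_and_generically_projDim_eq (b := 1) he (by omega) (by omega),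
    fun _ he _ => virtDim_eq_and_generically_projDim_eq (b := 2) he (by omega) (by omega)⟩
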